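/- arXiv:2401.11016 — 2 statements merged into one kernel-verified Lean document; each statement's English description precedes it below -/
import Mathlib

section
/- If u_j ≥ u_i, then under the PL+C model Pr(j ≻_R i | i, j ∈ R) ≥ 1/2: among rankings containing both i and j, the total PL+C probability of those ranking j above i is at least the total PL+C probability of those ranking i above j. -/
open scoped Classical
open Finset

noncomputable section

/-- Weight of a consideration set `C`: each item in `C` is considered (prob `p i`),
each item outside is not considered (prob `1 - p j`). -/
def considerWeight (n : ℕ) (p : Fin n → ℝ) (C : Finset (Fin n)) : ℝ :=
  (∏ i ∈ C, p i) * ∏ j ∈ Cᶜ, (1 - p j)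

/-- Normalizing constant `z_{k,p}`: total weight of consideration sets of size at least `k`. -/
def zConst (n k : ℕ) (p : Fin n → ℝ) : ℝ :=
  ∑ C ∈ Finset.univ.filter (fun C : Finset (Fin n) => k ≤ C.card), considerWeight n p C

/-- Probability of consideration set `C` (conditioned on `|C| ≥ k`). -/
def prC (n k : ℕ) (p : Fin n → ℝ) (C : Finset (Fin n)) : ℝ :=
  if k ≤ C.card then considerWeight n p C / zConst n k p else 0

/-- Plackett–Luce probability of the length-`k` ranking `r` given consideration set `C`. -/
def prPL (n k : ℕ) (u : Fin n → ℝ) (r : Fin k ↪ Fin n) (C : Finset (Fin n)) : ℝ :=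
  if ∀ t : Fin k, r t ∈ C then
    ∏ t : Fin k, Real.exp (u (r t)) /
      ∑ j ∈ C \ (Finset.Iio t).image r, Real.exp (u j)
  else 0

/-- Plackett–Luce-with-consideration (PL+C) probability of the ranking `r`. -/
def prPLC (n k : ℕ) (u p : Fin n → ℝ) (r : Fin k ↪ Fin n) : ℝ :=
  ∑ C : Finset (Fin n), prC n k p C * prPL n k u r C

/-- PL probability of a set of rankings. -/
def prPLset (n k : ℕ) (u : Fin n → ℝ) (R : Finset (Fin k ↪ Fin n)) (C : Finset (Fin n)) : ℝ :=
  ∑ r ∈ R, prPL n k u r C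

/-- PL+C probability of a set of rankings. -/
def prPLCset (n k : ℕ) (u p : Fin n → ℝ) (R : Finset (Fin k ↪ Fin n)) : ℝ :=
  ∑ r ∈ R, prPLC n k u p r

/-- `R_{i≤ℓ}`: the set of length-`k` rankings with item `i` among the top `ℓ` positions. -/
def topSet (n k : ℕ) (i : Fin n) (ℓ : ℕ) : Finset (Fin k ↪ Fin n) :=
  Finset.univ.filter (fun r => ∃ t : Fin k, (t : ℕ) < ℓ ∧ r t = i)

/-- The set of length-`k` rankings containing both `i` and `j`, with `i` ranked above `j`. -/
def aboveSet (n k : ℕ) (i j : Fin n) : Finset (Fin k ↪ Fin n) :=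
  Finset.univ.filter (fun r => ∃ s t : Fin k, s < t ∧ r s = i ∧ r t = j)

lemma aux_den (n k : ℕ) (u : Fin n → ℝ) (r : Fin k ↪ Fin n) (C : Finset (Fin n))
    (h : ∀ t, r t ∈ C) (t : Fin k) :
    ∑ j ∈ C \ (Finset.Iio t).image r, Real.exp (u j)
      = ∑ j ∈ C, Real.exp (u j) - ∑ x ∈ Finset.Iio t, Real.exp (u (r x)) := by
  have hsub : (Finset.Iio t).image r ⊆ C := by
    intro x hx
    obtain ⟨y, _, rfl⟩ := Finset.mem_image.1 hx
    exact h y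
  have h1 := Finset.sum_sdiff (f := fun j => Real.exp (u j)) hsub
  have h2 : ∑ j ∈ (Finset.Iio t).image r, Real.exp (u j)
      = ∑ x ∈ Finset.Iio t, Real.exp (u (r x)) :=
    Finset.sum_image (fun a _ b _ hab => r.injective hab)
  linarith

lemma aux_pos (n k : ℕ) (u : Fin n → ℝ) (r : Fin k ↪ Fin n) (C : Finset (Fin n))
    (h : ∀ t, r t ∈ C) (t : Fin k) :
    0 < ∑ j ∈ C \ (Finset.Iio t).image r, Real.exp (u j) := by
  apply Finset.sum_pos (fun _ _ => Real.exp_pos _)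
  refine ⟨r t, ?_⟩
  simp [h t]

lemma aux_PL (n k : ℕ) (u : Fin n → ℝ) (i j : Fin n) (hu : u i ≤ u j)
    (r r' : Fin k ↪ Fin n) (hr' : ∀ x, r' x = Equiv.swap i j (r x)) (s t : Fin k) (hst : s < t)
    (hs : r s = i) (ht : r t = j) (C : Finset (Fin n)) :
    prPL n k u r C ≤ prPL n k u r' C := by
  have hcomp : ∀ x, r' x = r (Equiv.swap s t x) := by
    intro x
    rw [hr', ← hs, ← ht]
    rw [Equiv.swap_apply_def, Equiv.swap_apply_def]
    simp only [r.injective.eq_iff]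
    split_ifs <;> rfl
  unfold prPL
  by_cases hC : ∀ x, r x ∈ C
  · have hC' : ∀ x, r' x ∈ C := fun x => by rw [hcomp]; exact hC _
    rw [if_pos hC, if_pos hC', Finset.prod_div_distrib, Finset.prod_div_distrib]
    have hnum : ∏ x, Real.exp (u (r' x)) = ∏ x, Real.exp (u (r x)) := by
      simp only [hcomp]
      exact Equiv.prod_comp (Equiv.swap s t) (fun x => Real.exp (u (r x)))
    rw [hnum]
    apply div_le_div_of_nonneg_left
    · exact Finset.prod_nonneg fun _ _ => (Real.exp_pos _).le
    · exact Finset.prod_pos fun x _ => aux_pos n k u r' C hC' x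
    · apply Finset.prod_le_prod
      · exact fun x _ => (aux_pos n k u r' C hC' x).le
      · intro x _
        rw [aux_den n k u r C hC, aux_den n k u r' C hC']
        have hd : 0 ≤ Real.exp (u j) - Real.exp (u i) := by
          have := Real.exp_le_exp.2 hu
          linarith
        have key : ∑ y ∈ Finset.Iio x, Real.exp (u (r' y))
            - ∑ y ∈ Finset.Iio x, Real.exp (u (r y))
            = (if s < x then Real.exp (u j) - Real.exp (u i) else 0)
             - (if t < x then Real.exp (u j) - Real.exp (u i) else 0) := by
          rw [← Finset.sum_sub_distrib]
          have : ∀ y ∈ Finset.Iio x, Real.exp (u (r' y)) - Real.exp (u (r y))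
              = (if y = s then Real.exp (u j) - Real.exp (u i) else 0)
               - (if y = t then Real.exp (u j) - Real.exp (u i) else 0) := by
            intro y _
            rw [hcomp, Equiv.swap_apply_def]
            by_cases h1 : y = s
            · subst h1
              simp [hst.ne, hs, ht]
            · by_cases h2 : y = t
              · subst h2
                simp [h1, hs, ht]
              · simp [h1, h2]
          rw [Finset.sum_congr rfl this, Finset.sum_sub_distrib]
          simp [Finset.sum_ite_eq']
        have : 0 ≤ (if s < x then Real.exp (u j) - Real.exp (u i) else 0)
             - (if t < x then Real.exp (u j) - Real.exp (u i) else 0) := by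
          by_cases h2 : t < x
          · simp [h2, hst.trans h2]
          · rw [if_neg h2]
            split_ifs <;> linarith
        linarith
  · rw [if_neg hC]
    split_ifs
    · exact Finset.prod_nonneg fun _ _ =>
        div_nonneg (Real.exp_pos _).le (Finset.sum_nonneg fun _ _ => (Real.exp_pos _).le)
    · exact le_rfl

lemma aux_w (n : ℕ) (p : Fin n → ℝ) (hp : ∀ a, 0 < p a ∧ p a ≤ 1) (C : Finset (Fin n)) :
    0 ≤ considerWeight n p C :=
  mul_nonneg (Finset.prod_nonneg fun a _ => (hp a).1.le)
    (Finset.prod_nonneg fun a _ => sub_nonneg.2 (hp a).2)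

lemma aux_C (n k : ℕ) (p : Fin n → ℝ) (hp : ∀ a, 0 < p a ∧ p a ≤ 1) (C : Finset (Fin n)) :
    0 ≤ prC n k p C := by
  unfold prC
  split_ifs
  · exact div_nonneg (aux_w n p hp C) (Finset.sum_nonneg fun D _ => aux_w n p hp D)
  · exact le_rfl

/-- if `u j ≥ u i`, then among PL+C rankings containing both `i` and `j`, the
total probability of those ranking `j` above `i` is at least that of those ranking `i`
above `j`. -/
theorem higher_utility_ranked_higher (n k : ℕ) (u p : Fin n → ℝ) (i j : Fin n)
    (hp : ∀ a, 0 < p a ∧ p a ≤ 1) (hu : u j ≥ u i) :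
    prPLCset n k u p (aboveSet n k j i) ≥ prPLCset n k u p (aboveSet n k i j) := by
  unfold prPLCset
  let e : (Fin k ↪ Fin n) → (Fin k ↪ Fin n) := fun r => r.trans (Equiv.swap i j).toEmbedding
  have he : ∀ r x, e r x = Equiv.swap i j (r x) := fun r x => rfl
  have hee : ∀ r, e (e r) = r := fun r => by ext x; simp [he]
  have hsum : ∑ r ∈ aboveSet n k j i, prPLC n k u p r
      = ∑ r ∈ aboveSet n k i j, prPLC n k u p (e r) := by
    refine Finset.sum_nbij' e e ?_ ?_ (fun r _ => hee r) (fun r _ => hee r) ?_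
    · intro r hr
      simp only [aboveSet, Finset.mem_filter, Finset.mem_univ, true_and] at hr ⊢
      obtain ⟨s, t, hst, hs, ht⟩ := hr
      exact ⟨s, t, hst, by simp [he, hs], by simp [he, ht]⟩
    · intro r hr
      simp only [aboveSet, Finset.mem_filter, Finset.mem_univ, true_and] at hr ⊢
      obtain ⟨s, t, hst, hs, ht⟩ := hr
      exact ⟨s, t, hst, by simp [he, hs], by simp [he, ht]⟩
    · intro r _
      rw [hee]
  rw [hsum]
  apply Finset.sum_le_sum
  intro r hr
  simp only [aboveSet, Finset.mem_filter, Finset.mem_univ, true_and] at hr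
  obtain ⟨s, t, hst, hs, ht⟩ := hr
  exact Finset.sum_le_sum fun C _ => mul_le_mul_of_nonneg_left
    (aux_PL n k u i j hu r (e r) (he r) s t hst hs ht C) (aux_C n k p hp C)
end
end

section
/- Suppose Σ_{i∈U} p_i ≥ αk for some α > 1. Let i, j ∈ U with i ≠ j, and let Pr'_{PL+C} denote PL+C probabilities after replacing p_j by some p_j' with p_j < p_j' ≤ 1 (all other parameters unchanged). Then Pr'_{PL+C}(R_{i=1}) ≤ Pr_{PL+C}(R_{i=1}) + (α e^{1-α})^k / (1 - (α e^{1-α})^k), where R_{i=1} is the set of length-k rankings with item i in first position. -/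
open scoped Classical
open Finset

noncomputable section

lemma prPL_cons (n k : ℕ) (u : Fin n → ℝ) (r : Fin (k+1) ↪ Fin n) (e : Fin k ↪ Fin n)
    (he : ∀ t, r t.succ = e t) (C : Finset (Fin n)) :
    prPL n (k+1) u r C = if r 0 ∈ C then
      Real.exp (u (r 0)) / (∑ j ∈ C, Real.exp (u j)) * prPL n k u e (C.erase (r 0)) else 0 := by
  unfold prPL
  by_cases h0 : r 0 ∈ C
  · have hc : (∀ t, r t ∈ C) ↔ (∀ t, e t ∈ C.erase (r 0)) := by
      rw [Fin.forall_fin_succ]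
      simp only [h0, true_and, Finset.mem_erase, ← he]
      refine forall_congr' fun t => ?_
      have : r t.succ ≠ r 0 := fun h => Fin.succ_ne_zero t (r.injective h)
      simp [this]
    rw [if_pos h0]
    by_cases h : ∀ t, r t ∈ C
    · rw [if_pos h, if_pos (hc.1 h), Fin.prod_univ_succ]
      congr 1
      · have : (Finset.Iio (0 : Fin (k+1))) = ∅ := by
          ext x; simp
        rw [this]; simp
      · refine Finset.prod_congr rfl fun t _ => ?_
        rw [he]
        congr 2
        ext x
        simp only [Finset.mem_sdiff, Finset.mem_image, Finset.mem_Iio, Finset.mem_erase]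
        constructor
        · rintro ⟨hx, h2⟩
          refine ⟨⟨fun hx0 => h2 ⟨0, Fin.succ_pos t, hx0.symm⟩, hx⟩, ?_⟩
          rintro ⟨a, ha, rfl⟩
          exact h2 ⟨a.succ, Fin.succ_lt_succ_iff.2 ha, he a⟩
        · rintro ⟨⟨hx0, hx⟩, h2⟩
          refine ⟨hx, ?_⟩
          rintro ⟨a, ha, rfl⟩
          induction a using Fin.cases with
          | zero => exact hx0 rfl
          | succ a => exact h2 ⟨a, Fin.succ_lt_succ_iff.1 ha, (he a).symm⟩
    · rw [if_neg h, if_neg (fun h' => h (hc.2 h'))]; simp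
  · rw [if_neg h0, if_neg (fun h => h0 (h 0))]

lemma sum_first (n k : ℕ) (u : Fin n → ℝ) (i : Fin n) (C : Finset (Fin n)) :
    ∑ r : Fin (k+1) ↪ Fin n with r 0 = i, prPL n (k+1) u r C =
      if i ∈ C then Real.exp (u i) / (∑ j ∈ C, Real.exp (u j)) *
        ∑ e : Fin k ↪ Fin n, prPL n k u e (C.erase i) else 0 := by
  split_ifs with hi
  · rw [Finset.mul_sum]
    have key : ∀ r : Fin (k+1) ↪ Fin n, r 0 = i → prPL n (k+1) u r C =
        Real.exp (u i) / (∑ j ∈ C, Real.exp (u j)) *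
          prPL n k u ((Fin.succEmb k).trans r) (C.erase i) := by
      intro r hr
      rw [prPL_cons n k u r ((Fin.succEmb k).trans r) (fun t => rfl) C, hr, if_pos hi]
    refine Finset.sum_bij_ne_zero (fun r _ _ => (Fin.succEmb k).trans r) ?_ ?_ ?_ ?_
    · intros; simp
    · intro r hr _ r' hr' _ h
      simp only [Finset.mem_filter, Finset.mem_univ, true_and] at hr hr'
      ext t
      induction t using Fin.cases with
      | zero => rw [hr, hr']
      | succ t => exact congrArg Fin.val (DFunLike.congr_fun h t)
    · intro e _ hne
      have hin : ∀ t, e t ∈ C.erase i := by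
        by_contra h
        apply hne
        unfold prPL
        rw [if_neg h, mul_zero]
      have hinj : Function.Injective (Fin.cons i e : Fin (k+1) → Fin n) := by
        rw [Fin.cons_injective_iff]
        refine ⟨?_, e.injective⟩
        rintro ⟨t, ht⟩
        exact (Finset.mem_erase.1 (hin t)).1 ht
      have e1 : (Fin.succEmb k).trans (⟨Fin.cons i e, hinj⟩ : Fin (k+1) ↪ Fin n) = e := by
        ext t; simp
      refine ⟨⟨Fin.cons i e, hinj⟩, by simp, ?_, e1⟩
      rw [key _ (by simp), e1]
      exact hne
    · intro r hr _
      simp only [Finset.mem_filter, Finset.mem_univ, true_and] at hr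
      exact key r hr
  · refine Finset.sum_eq_zero fun r hr => ?_
    simp only [Finset.mem_filter, Finset.mem_univ, true_and] at hr
    unfold prPL
    rw [if_neg]
    intro h
    exact hi (hr ▸ h 0)

lemma sum_all (n k : ℕ) (u : Fin n → ℝ) : ∀ C : Finset (Fin n), k ≤ C.card →
    ∑ r : Fin k ↪ Fin n, prPL n k u r C = 1 := by
  induction k with
  | zero =>
    intro C _
    simp [prPL]
  | succ k ih =>
    intro C hC
    rw [← Finset.sum_fiberwise (s := Finset.univ) (g := fun r : Fin (k+1) ↪ Fin n => r 0)]
    simp only [sum_first]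
    rw [← Finset.sum_filter]
    have hf : Finset.univ.filter (fun a => a ∈ C) = C := by ext; simp
    rw [hf]
    have : ∀ i ∈ C, Real.exp (u i) / (∑ j ∈ C, Real.exp (u j)) *
        ∑ e : Fin k ↪ Fin n, prPL n k u e (C.erase i) =
        Real.exp (u i) / (∑ j ∈ C, Real.exp (u j)) := by
      intro i hi
      rw [ih, mul_one]
      rw [Finset.card_erase_of_mem hi]; omega
    rw [Finset.sum_congr rfl this, ← Finset.sum_div]
    apply div_self
    have hne : C.Nonempty := Finset.card_pos.1 (by omega)
    exact (Finset.sum_pos (fun j _ => Real.exp_pos (u j)) hne).ne'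

lemma sum_top (n k : ℕ) (hk : 1 ≤ k) (u : Fin n → ℝ) (i : Fin n) (C : Finset (Fin n))
    (hC : k ≤ C.card) :
    prPLset n k u (topSet n k i 1) C =
      if i ∈ C then Real.exp (u i) / (∑ j ∈ C, Real.exp (u j)) else 0 := by
  obtain ⟨k, rfl⟩ : ∃ m, k = m + 1 := ⟨k - 1, by omega⟩
  have : topSet n (k+1) i 1 = Finset.univ.filter (fun r : Fin (k+1) ↪ Fin n => r 0 = i) := by
    unfold topSet
    ext r
    simp only [Finset.mem_filter, Finset.mem_univ, true_and]
    constructor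
    · rintro ⟨t, ht, h⟩
      have : t = 0 := Fin.ext (by rw [Fin.val_zero]; omega)
      rw [← this]; exact h
    · intro h; exact ⟨0, by simp, h⟩
  unfold prPLset
  rw [this, sum_first]
  split_ifs with hi
  · rw [sum_all, mul_one]
    rw [Finset.card_erase_of_mem hi]; omega
  · rfl

lemma top_le_one (n k : ℕ) (hk : 1 ≤ k) (u : Fin n → ℝ) (i : Fin n) (C : Finset (Fin n))
    (hC : k ≤ C.card) : prPLset n k u (topSet n k i 1) C ≤ 1 := by
  rw [sum_top n k hk u i C hC]
  split_ifs with hi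
  · apply div_le_one_of_le₀
    · exact Finset.single_le_sum (f := fun j => Real.exp (u j)) (fun j _ => (Real.exp_pos _).le) hi
    · exact Finset.sum_nonneg fun j _ => (Real.exp_pos _).le
  · exact zero_le_one

lemma top_nonneg (n k : ℕ) (u : Fin n → ℝ) (R) (C : Finset (Fin n)) :
    0 ≤ prPLset n k u R C := by
  unfold prPLset prPL
  refine Finset.sum_nonneg fun r _ => ?_
  split_ifs
  · exact Finset.prod_nonneg fun t _ => div_nonneg (Real.exp_pos _).le
      (Finset.sum_nonneg fun j _ => (Real.exp_pos _).le)
  · exact le_rfl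

lemma top_anti (n k : ℕ) (hk : 1 ≤ k) (u : Fin n → ℝ) (i j : Fin n) (hij : i ≠ j)
    (D : Finset (Fin n)) (hD : k ≤ D.card) (hj : j ∉ D) :
    prPLset n k u (topSet n k i 1) (insert j D) ≤ prPLset n k u (topSet n k i 1) D := by
  rw [sum_top n k hk u i D hD, sum_top n k hk u i _
    (hD.trans (Finset.card_le_card (Finset.subset_insert _ _)))]
  have : i ∈ insert j D ↔ i ∈ D := by simp [hij]
  simp only [this]
  split_ifs with hi
  · rw [Finset.sum_insert hj]
    have hne : D.Nonempty := ⟨i, hi⟩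
    have h0 := Finset.sum_pos (fun j _ => Real.exp_pos (u j)) hne
    apply div_le_div_of_nonneg_left (Real.exp_pos _).le h0
    linarith [Real.exp_pos (u j)]
  · exact le_rfl

lemma weight_nonneg (n : ℕ) (p : Fin n → ℝ) (hp : ∀ a, 0 < p a ∧ p a ≤ 1) (C) :
    0 ≤ considerWeight n p C :=
  mul_nonneg (Finset.prod_nonneg fun a _ => (hp a).1.le)
    (Finset.prod_nonneg fun a _ => sub_nonneg.2 (hp a).2)

lemma sum_weight_pow (n : ℕ) (p : Fin n → ℝ) (s : ℝ) :
    ∑ C, considerWeight n p C * s ^ C.card = ∏ a, (p a * s + (1 - p a)) := by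
  rw [Finset.prod_add]
  rw [Finset.powerset_univ]
  refine Finset.sum_congr rfl fun C _ => ?_
  rw [Finset.prod_mul_distrib, Finset.prod_const, ← Finset.compl_eq_univ_sdiff]
  unfold considerWeight
  ring

lemma sum_weight (n : ℕ) (p : Fin n → ℝ) : ∑ C, considerWeight n p C = 1 := by
  have := sum_weight_pow n p 1
  simpa using this

lemma weight_mono (n : ℕ) (p : Fin n → ℝ) (j : Fin n) (q : ℝ) (hp : ∀ a, 0 < p a ∧ p a ≤ 1)
    (hq : p j ≤ q) (φ : Finset (Fin n) → ℝ) (hφ : ∀ D, j ∉ D → φ D ≤ φ (insert j D)) :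
    ∑ C, considerWeight n p C * φ C ≤ ∑ C, considerWeight n (Function.update p j q) C * φ C := by
  have hu : (Finset.univ : Finset (Finset (Fin n))) =
      (insert j (Finset.univ.erase j)).powerset := by
    rw [Finset.insert_erase (Finset.mem_univ j), Finset.powerset_univ]
  have hcomp : ∀ D : Finset (Fin n), j ∉ D → Dᶜ = insert j ((insert j D)ᶜ) := by
    intro D hD; ext x; by_cases hx : x = j <;> simp [hx, hD]
  have w1 : ∀ (p : Fin n → ℝ) D, j ∉ D → considerWeight n p D =
      (1 - p j) * ((∏ a ∈ D, p a) * ∏ a ∈ (insert j D)ᶜ, (1 - p a)) := by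
    intro p D hD
    unfold considerWeight
    rw [hcomp D hD, Finset.prod_insert (by simp)]; ring
  have w2 : ∀ (p : Fin n → ℝ) D, j ∉ D → considerWeight n p (insert j D) =
      p j * ((∏ a ∈ D, p a) * ∏ a ∈ (insert j D)ᶜ, (1 - p a)) := by
    intro p D hD
    unfold considerWeight
    rw [Finset.prod_insert hD]; ring
  rw [hu, Finset.sum_powerset_insert (Finset.notMem_erase j _),
    Finset.sum_powerset_insert (Finset.notMem_erase j _), ← Finset.sum_add_distrib,
    ← Finset.sum_add_distrib]
  refine Finset.sum_le_sum fun D hD => ?_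
  have hj : j ∉ D := fun h => Finset.notMem_erase j _ (Finset.mem_powerset.1 hD h)
  rw [w1 _ D hj, w2 _ D hj, w1 _ D hj, w2 _ D hj]
  have e1 : ∏ a ∈ D, Function.update p j q a = ∏ a ∈ D, p a :=
    Finset.prod_congr rfl fun a ha => by
      rw [Function.update_of_ne]
      rintro rfl
      exact hj ha
  have e2 : ∏ a ∈ (insert j D)ᶜ, (1 - Function.update p j q a) =
      ∏ a ∈ (insert j D)ᶜ, (1 - p a) :=
    Finset.prod_congr rfl fun a ha => by
      rw [Function.update_of_ne]
      rintro rfl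
      simp at ha
  rw [e1, e2, Function.update_self]
  have hw : 0 ≤ (∏ a ∈ D, p a) * ∏ a ∈ (insert j D)ᶜ, (1 - p a) :=
    mul_nonneg (Finset.prod_nonneg fun a _ => (hp a).1.le)
      (Finset.prod_nonneg fun a _ => sub_nonneg.2 (hp a).2)
  set w := (∏ a ∈ D, p a) * ∏ a ∈ (insert j D)ᶜ, (1 - p a)
  nlinarith [mul_nonneg (mul_nonneg (sub_nonneg.2 hq) hw) (sub_nonneg.2 (hφ D hj))]

lemma z_lower (n k : ℕ) (p : Fin n → ℝ) (α : ℝ) (hp : ∀ a, 0 < p a ∧ p a ≤ 1)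
    (hα : 1 < α) (hsum : α * k ≤ ∑ a, p a) :
    1 - (α * Real.exp (1 - α)) ^ k ≤ zConst n k p := by
  have hα0 : 0 < α := by linarith
  have h1 : 1 - zConst n k p =
      ∑ C, if k ≤ C.card then 0 else considerWeight n p C := by
    rw [← sum_weight n p, zConst, Finset.sum_filter, ← Finset.sum_sub_distrib]
    refine Finset.sum_congr rfl fun C _ => ?_
    split_ifs <;> simp
  have h2 : (∑ C, if k ≤ C.card then 0 else considerWeight n p C) ≤
      ∑ C, α ^ k * (considerWeight n p C * (α⁻¹) ^ C.card) := by
    refine Finset.sum_le_sum fun C _ => ?_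
    have hw := weight_nonneg n p hp C
    split_ifs with h
    · positivity
    · have : 1 ≤ α ^ k * (α⁻¹) ^ C.card := by
        rw [inv_pow, ← div_eq_mul_inv, one_le_div (by positivity)]
        exact pow_le_pow_right₀ hα.le (by omega)
      nlinarith
  have h3 : ∏ a, (p a * α⁻¹ + (1 - p a)) ≤ Real.exp ((1 - α) * k) := by
    calc ∏ a, (p a * α⁻¹ + (1 - p a)) ≤ ∏ a, Real.exp (-(1 - α⁻¹) * p a) := by
          refine Finset.prod_le_prod (fun a _ => ?_) (fun a _ => ?_)
          · have := (hp a).1; have := (hp a).2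
            have : 0 < p a * α⁻¹ := by positivity
            linarith
          · have := Real.add_one_le_exp (-(1 - α⁻¹) * p a)
            linarith
      _ = Real.exp (-(1 - α⁻¹) * ∑ a, p a) := by rw [← Real.exp_sum, Finset.mul_sum]
      _ ≤ _ := by
          apply Real.exp_le_exp.2
          have hi : 0 ≤ 1 - α⁻¹ := sub_nonneg.2 (inv_le_one_of_one_le₀ hα.le)
          have := mul_le_mul_of_nonneg_left hsum hi
          have e : (1 - α⁻¹) * (α * k) = (α - 1) * k := by field_simp
          linarith
  rw [← Finset.mul_sum, sum_weight_pow] at h2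
  have h4 : (α * Real.exp (1 - α)) ^ k = α ^ k * Real.exp ((1 - α) * k) := by
    rw [mul_pow, ← Real.exp_nat_mul, mul_comm (k : ℝ)]
  have h5 := mul_le_mul_of_nonneg_left h3 (pow_pos hα0 k).le
  linarith

lemma plc_eq (n k : ℕ) (u p : Fin n → ℝ) (R : Finset (Fin k ↪ Fin n)) :
    prPLCset n k u p R = (∑ C, considerWeight n p C *
      (if k ≤ C.card then prPLset n k u R C else 0)) / zConst n k p := by
  unfold prPLCset prPLC
  rw [Finset.sum_comm, Finset.sum_div]
  refine Finset.sum_congr rfl fun C _ => ?_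
  rw [← Finset.mul_sum]
  unfold prC prPLset
  split_ifs
  · ring
  · simp

/-- increasing `p j` to `p j'` cannot increase the probability that `i` is
ranked first, up to an additive error term. (`R_{i=1}` is `topSet n k i 1`.) -/
theorem increase_pj (n k : ℕ) (u p : Fin n → ℝ) (α : ℝ) (i j : Fin n) (pj' : ℝ)
    (hp : ∀ a, 0 < p a ∧ p a ≤ 1) (hk : 1 ≤ k) (hkn : k ≤ n)
    (hα : 1 < α) (hsum : α * k ≤ ∑ a, p a)
    (hij : i ≠ j) (hlt : p j < pj') (hle : pj' ≤ 1) :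
    prPLCset n k u (Function.update p j pj') (topSet n k i 1) ≤
      prPLCset n k u p (topSet n k i 1) +
        (α * Real.exp (1 - α)) ^ k / (1 - (α * Real.exp (1 - α)) ^ k) := by
  set q := Function.update p j pj' with hqdef
  have hq : ∀ a, 0 < q a ∧ q a ≤ 1 := by
    intro a
    by_cases h : a = j
    · subst h
      rw [hqdef, Function.update_self]
      exact ⟨(hp a).1.trans hlt, hle⟩
    · rw [hqdef, Function.update_of_ne h]; exact hp a
  have hz := z_lower n k p α hp hα hsum
  set ε := (α * Real.exp (1 - α)) ^ k with hε
  have hε0 : 0 ≤ ε := by positivity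
  have hε1 : ε < 1 := by
    apply pow_lt_one₀ (by positivity) _ (by omega)
    have h := Real.add_one_lt_exp (x := α - 1) (by linarith)
    have e : Real.exp (1 - α) = (Real.exp (α - 1))⁻¹ := by rw [← Real.exp_neg]; congr 1; ring
    rw [e, ← div_eq_mul_inv, div_lt_one (Real.exp_pos _)]
    linarith
  have zeq : ∀ p : Fin n → ℝ, zConst n k p =
      ∑ C, considerWeight n p C * (if k ≤ C.card then 1 else 0) := by
    intro p
    rw [zConst, Finset.sum_filter]
    refine Finset.sum_congr rfl fun C _ => ?_
    split_ifs <;> simp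
  have hzq1 : zConst n k q ≤ 1 := by
    rw [zeq]
    refine le_trans ?_ (sum_weight n q).le
    refine Finset.sum_le_sum fun C _ => ?_
    have := weight_nonneg n q hq C
    split_ifs <;> simp [this]
  have hzz : zConst n k p ≤ zConst n k q := by
    rw [zeq, zeq]
    refine weight_mono n p j pj' hp hlt.le _ fun D hD => ?_
    rw [Finset.card_insert_of_notMem hD]
    split_ifs <;> first | omega | norm_num
  have hm := weight_mono n p j pj' hp hlt.le
    (fun C => (if k ≤ C.card then (1:ℝ) else 0) -
      (if k ≤ C.card then prPLset n k u (topSet n k i 1) C else 0)) (fun D hD => by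
    have hc := Finset.card_insert_of_notMem hD
    by_cases h : k ≤ D.card
    · have h' : k ≤ (insert j D).card := by omega
      have := top_anti n k hk u i j hij D h hD
      simp only [h, h', if_true]
      linarith
    · by_cases h' : k ≤ (insert j D).card
      · have := top_le_one n k hk u i _ h'
        simp only [h, h', if_true, if_false]
        linarith
      · simp only [h, h', if_false]; exact le_rfl)
  simp only [mul_sub, Finset.sum_sub_distrib] at hm
  rw [← hqdef, ← zeq, ← zeq] at hm
  rw [plc_eq, plc_eq]
  set Np := ∑ C, considerWeight n p C *
      (if k ≤ C.card then prPLset n k u (topSet n k i 1) C else 0)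
  have hNq0 : 0 ≤ ∑ C, considerWeight n q C *
      (if k ≤ C.card then prPLset n k u (topSet n k i 1) C else 0) := by
    refine Finset.sum_nonneg fun C _ => mul_nonneg (weight_nonneg n q hq C) ?_
    split_ifs
    · exact top_nonneg _ _ _ _ _
    · exact le_rfl
  set Nq := ∑ C, considerWeight n q C *
      (if k ≤ C.card then prPLset n k u (topSet n k i 1) C else 0)
  have hzp : 0 < zConst n k p := by linarith
  calc Nq / zConst n k q ≤ Nq / zConst n k p := div_le_div_of_nonneg_left hNq0 hzp hzz
    _ ≤ (Np + ε) / zConst n k p := by gcongr; linarith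
    _ = Np / zConst n k p + ε / zConst n k p := add_div _ _ _
    _ ≤ _ := by
      gcongr
end
end
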